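/- (Corollary 4.4.) Let q be a complex number with 0 < |q| < 1, and let k ≥ 1 and 1 ≤ j ≤ k be integers. Then ∑_{s_1 ≥ s_2 ≥ ⋯ ≥ s_{k+1} ≥ 0} q^{E} / (q;q)_{s_1-s_2} · ∏_{i=3}^{k+2} (-q^{2^{i-3}}; q^{2^{i-3}})_{2 s_i} / (q^{2^{i-2}}; q^{2^{i-2}})_{s_{i-1} - s_i} = (q^{2^k+4}, q^{2^{j-1}+2}, q^{2^k - 2^{j-1} + 2}; q^{2^k+4})_∞ / (q;q)_∞, where E = s_1^2 + s_2^2 + s_2 + ∑_{m=3}^{k+1} 2^{m-3} s_m - 2^{j-1} s_{j+1} and s_{k+2} = 0. Moreover, if the term -2^{j-1} s_{j+1} in E is replaced by 0, the right side becomes (q^{2^k+4}, q^{2}, q^{2^k+2}; q^{2^k+4})_∞ / (q;q)_∞, and if it is replaced by +s_1, the right side becomes (q^{2^k+4}, q, q^{2^k+3}; q^{2^k+4})_∞ / (q;q)_∞. -/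

import Mathlib

/-- The finite q-Pochhammer symbol `(x;q)_n = ∏_{j=0}^{n-1} (1 - x q^j)`. -/
noncomputable def qPoch (x q : ℂ) (n : ℕ) : ℂ := ∏ j ∈ Finset.range n, (1 - x * q ^ j)

/-- The infinite q-Pochhammer symbol `(x;q)_∞ = ∏_{j=0}^{∞} (1 - x q^j)`. -/
noncomputable def qPochInf (x q : ℂ) : ℂ := ∏' j : ℕ, (1 - x * q ^ j)

open Filter Finset Topology

/-!
A sequence `α` on `ℤ` determines `β n = ∑ᵣ αᵣ / ((q;q)_{n+r} (q;q)_{n-r})`. Summing `β` against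
one kernel multiplies `αᵣ` by `q ^ r²` (Bailey's lemma); summing the `β` of base `q²` against
another gives the `β` of base `q` with the same `α` (change of base). Read from the innermost index
outwards, the multisum starts from the theta term `αᵣ = (-1)ʳ Q^{r(r-1)/2}` with `Q = q ^ 2ᵏ`, for
which `β n` vanishes unless `n = 0`, changes the base `k` times from `Q` down to `q`, and ends with
two applications of Bailey's lemma. Since `α` remains a theta term throughout, the Jacobi triple
product evaluates the result. The extra powers of `q` come from an antisymmetry: if
`α (1 - r) = -α r`, then dividing `β n` by `q ^ n` amounts to multiplying `αᵣ` by `q ^ r`.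

Both kernel identities are the case `x = q^{2r+1}` of identities in a free variable `x` whose two
sides obey the same recurrence in `x ↦ xq`; iterating it moves `x` to `0`, where they are
elementary.
-/

section qPochhammer

lemma qPoch_zero (x q : ℂ) : qPoch x q 0 = 1 := by simp [qPoch]

lemma qPoch_zero_left (q : ℂ) (n : ℕ) : qPoch 0 q n = 1 := by simp [qPoch]

lemma qPoch_succ (x q : ℂ) (n : ℕ) : qPoch x q (n + 1) = qPoch x q n * (1 - x * q ^ n) :=
  prod_range_succ _ _

lemma qPoch_succ' (x q : ℂ) (n : ℕ) : qPoch x q (n + 1) = (1 - x) * qPoch (x * q) q n := by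
  simp only [qPoch, prod_range_succ', pow_zero, mul_one, mul_comm (1 - x), pow_succ', mul_assoc]

lemma qPoch_add (x q : ℂ) (m n : ℕ) :
    qPoch x q (m + n) = qPoch x q m * qPoch (x * q ^ m) q n := by
  simp only [qPoch, prod_range_add, pow_add, mul_assoc]

lemma one_sub_mul_qPoch_mul (x q : ℂ) (n : ℕ) :
    (1 - x) * qPoch (x * q) q n = qPoch x q n * (1 - x * q ^ n) := by
  rw [← qPoch_succ', qPoch_succ]

lemma qPoch_mul_qPoch_neg (x q : ℂ) (n : ℕ) :
    qPoch x q n * qPoch (-x) q n = qPoch (x ^ 2) (q ^ 2) n := by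
  simp only [qPoch, ← prod_mul_distrib]
  exact prod_congr rfl fun _ _ => by ring

lemma continuous_qPoch (q : ℂ) (n : ℕ) : Continuous fun x => qPoch x q n := by
  unfold qPoch
  fun_prop

lemma one_sub_ne_zero {R : Type*} [NormedRing R] [NormOneClass R] {x : R} (hx : ‖x‖ < 1) :
    1 - x ≠ 0 :=
  sub_ne_zero.mpr fun h => by simp [← h] at hx

lemma norm_mul_pow_le {R : Type*} [NormedDivisionRing R] {x q : R} (hq : ‖q‖ ≤ 1) (n : ℕ) :
    ‖x * q ^ n‖ ≤ ‖x‖ := by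
  rw [norm_mul, norm_pow]
  exact mul_le_of_le_one_right (norm_nonneg x) (pow_le_one₀ (norm_nonneg q) hq)

lemma norm_pow_lt_one {R : Type*} [NormedDivisionRing R] {q : R} (hq : ‖q‖ < 1) {n : ℕ}
    (hn : n ≠ 0) : ‖q ^ n‖ < 1 := by
  rw [norm_pow]
  exact pow_lt_one₀ (norm_nonneg q) hq hn

variable {x q : ℂ}

lemma one_sub_mul_pow_ne_zero (hx : ‖x‖ < 1) (hq : ‖q‖ < 1) (n : ℕ) : 1 - x * q ^ n ≠ 0 :=
  one_sub_ne_zero ((norm_mul_pow_le hq.le n).trans_lt hx)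

lemma qPoch_ne_zero (hx : ‖x‖ < 1) (hq : ‖q‖ < 1) (n : ℕ) : qPoch x q n ≠ 0 :=
  prod_ne_zero_iff.mpr fun j _ => one_sub_mul_pow_ne_zero hx hq j

lemma inv_qPoch_eq_mul_inv_qPoch_succ {n : ℕ} (h : 1 - x * q ^ n ≠ 0) :
    (qPoch x q n)⁻¹ = (1 - x * q ^ n) * (qPoch x q (n + 1))⁻¹ := by
  rw [qPoch_succ, mul_inv_rev, mul_inv_cancel_left₀ h]

variable (x) in
lemma summable_norm_neg_mul_pow (hq : ‖q‖ < 1) : Summable fun j : ℕ => ‖-(x * q ^ j)‖ := by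
  simpa only [norm_neg, norm_mul, norm_pow] using
    (summable_geometric_of_lt_one (norm_nonneg q) hq).mul_left ‖x‖

variable (x) in
lemma tendsto_qPoch (hq : ‖q‖ < 1) : Tendsto (qPoch x q) atTop (𝓝 (qPochInf x q)) := by
  have h := multipliable_one_add_of_summable (summable_norm_neg_mul_pow x hq)
  simp only [← sub_eq_add_neg] at h
  exact h.hasProd.tendsto_prod_nat

lemma qPochInf_ne_zero (hx : ‖x‖ < 1) (hq : ‖q‖ < 1) : qPochInf x q ≠ 0 := by
  have h := tprod_one_add_ne_zero_of_summable (f := fun j : ℕ => -(x * q ^ j))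
    (fun j => by simpa only [← sub_eq_add_neg] using one_sub_mul_pow_ne_zero hx hq j)
    (summable_norm_neg_mul_pow x hq)
  simpa only [qPochInf, ← sub_eq_add_neg] using h

variable (x) in
lemma exists_norm_qPoch_le (hq : ‖q‖ < 1) : ∃ M, ∀ n, ‖qPoch x q n‖ ≤ M :=
  let ⟨M, hM⟩ := (tendsto_qPoch x hq).norm.bddAbove_range
  ⟨M, fun n => hM ⟨n, rfl⟩⟩

lemma exists_norm_inv_qPoch_le (hx : ‖x‖ < 1) (hq : ‖q‖ < 1) :
    ∃ M, ∀ n, ‖(qPoch x q n)⁻¹‖ ≤ M :=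
  let ⟨M, hM⟩ := ((tendsto_qPoch x hq).inv₀ (qPochInf_ne_zero hx hq)).norm.bddAbove_range
  ⟨M, fun n => hM ⟨n, rfl⟩⟩

end qPochhammer

section qPochInv

/-- The reciprocal `1/(q;q)_m` for an integer index `m`, with the usual convention that it
vanishes for `m < 0`. -/
noncomputable def qPochInv (q : ℂ) (m : ℤ) : ℂ := if 0 ≤ m then (qPoch q q m.toNat)⁻¹ else 0

variable {q : ℂ}

lemma qPochInv_natCast (q : ℂ) (n : ℕ) : qPochInv q n = (qPoch q q n)⁻¹ := by simp [qPochInv]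

lemma qPochInv_of_neg (q : ℂ) {m : ℤ} (hm : m < 0) : qPochInv q m = 0 := by simp [qPochInv, hm]

lemma qPochInv_sub_one (hq : ‖q‖ < 1) (m : ℤ) :
    qPochInv q (m - 1) = (1 - q ^ m) * qPochInv q m := by
  rcases lt_trichotomy m 0 with hm | rfl | hm
  · rw [qPochInv_of_neg q hm, qPochInv_of_neg q (by omega), mul_zero]
  · simp [qPochInv_of_neg]
  · obtain ⟨n, rfl⟩ : ∃ n : ℕ, m = (n + 1 : ℕ) := ⟨(m - 1).toNat, by omega⟩
    rw [Nat.cast_succ, add_sub_cancel_right, ← Nat.cast_succ, qPochInv_natCast, qPochInv_natCast,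
      inv_qPoch_eq_mul_inv_qPoch_succ (one_sub_mul_pow_ne_zero hq hq n), zpow_natCast, pow_succ']

lemma exists_norm_qPochInv_le (hq : ‖q‖ < 1) : ∃ M, ∀ m, ‖qPochInv q m‖ ≤ M := by
  obtain ⟨M, hM⟩ := exists_norm_inv_qPoch_le hq hq
  refine ⟨M, fun m => ?_⟩
  unfold qPochInv
  split_ifs
  · exact hM _
  · simpa using (norm_nonneg _).trans (hM 0)

lemma tendsto_qPochInv (hq : ‖q‖ < 1) : Tendsto (qPochInv q) atTop (𝓝 (qPochInf q q)⁻¹) := by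
  have h : Tendsto (fun m : ℤ => (qPoch q q m.toNat)⁻¹) atTop (𝓝 (qPochInf q q)⁻¹) :=
    ((tendsto_qPoch q hq).inv₀ (qPochInf_ne_zero hq hq)).comp
      (tendsto_atTop_atTop.mpr fun b => ⟨b, fun a ha => by omega⟩)
  refine h.congr' ?_
  filter_upwards [eventually_ge_atTop 0] with m hm
  simp [qPochInv, hm]

end qPochInv

section Contiguity

/-- Families `F N x` obeying the contiguous relation in `x` that characterises
`1 / ((q;q)_N (x;q)_N)`, together with the regularity at `x = 0` needed to iterate `x ↦ xq`. -/
structure IsContiguousFamily (q : ℂ) (F : ℕ → ℂ → ℂ) : Prop where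
  apply_zero : ∀ x, F 0 x = 1
  apply_succ : ∀ N x, ‖x‖ < 1 →
    F (N + 1) x = F (N + 1) (x * q) + x / ((1 - x) * (1 - x * q)) * F N (x * q ^ 2)
  continuousAt : ∀ N, ContinuousAt (F N) 0

variable {q x : ℂ}

lemma eq_apply_zero_of_apply_mul_eq (hq : ‖q‖ < 1) {d : ℂ → ℂ} (hd : ContinuousAt d 0)
    (hstep : ∀ x, ‖x‖ < 1 → d (x * q) = d x) (hx : ‖x‖ < 1) : d x = d 0 := by
  have hiter (m : ℕ) : d (x * q ^ m) = d x := by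
    induction m with
    | zero => simp
    | succ m ih =>
      rw [pow_succ, ← mul_assoc, hstep _ ((norm_mul_pow_le hq.le m).trans_lt hx), ih]
  have hlim : Tendsto (fun m : ℕ => x * q ^ m) atTop (𝓝 0) := by
    simpa using (tendsto_pow_atTop_nhds_zero_of_norm_lt_one hq).const_mul x
  exact tendsto_nhds_unique (tendsto_const_nhds.congr fun m => (hiter m).symm)
    (hd.tendsto.comp hlim)

lemma IsContiguousFamily.eq_of_apply_zero_eq (hq : ‖q‖ < 1) {F G : ℕ → ℂ → ℂ}
    (hF : IsContiguousFamily q F) (hG : IsContiguousFamily q G) (h0 : ∀ N, F N 0 = G N 0) (N : ℕ)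
    {x : ℂ} (hx : ‖x‖ < 1) : F N x = G N x := by
  induction N generalizing x with
  | zero => rw [hF.apply_zero, hG.apply_zero]
  | succ N ih =>
    rw [← sub_eq_zero, eq_apply_zero_of_apply_mul_eq hq (d := fun x => F (N + 1) x - G (N + 1) x)
      ((hF.continuousAt _).sub (hG.continuousAt _)) ?_ hx, h0, sub_self]
    intro x hx
    rw [hF.apply_succ N x hx, hG.apply_succ N x hx, ih ((norm_mul_pow_le hq.le 2).trans_lt hx)]
    ring

lemma IsContiguousFamily.convolution {g : ℕ → ℂ → ℂ} (hg : IsContiguousFamily q g) {a : ℕ → ℂ}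
    (ha : a 0 = 1) :
    IsContiguousFamily q fun N x => ∑ p ∈ antidiagonal N, a p.2 * g p.1 x where
  apply_zero x := by simp [hg.apply_zero, ha]
  apply_succ N x hx := by
    simp only [Nat.sum_antidiagonal_succ, hg.apply_zero, hg.apply_succ _ x hx, mul_add,
      sum_add_distrib, mul_sum, mul_left_comm (a _), add_assoc]
  continuousAt N := tendsto_finsetSum _ fun p _ => continuousAt_const.mul (hg.continuousAt p.1)

lemma qPoch_mul_sq_left (hq : ‖q‖ ≤ 1) (hx : ‖x‖ < 1) (n : ℕ) :
    qPoch (x * q ^ 2) q n = qPoch (x * q) q n * (1 - x * q * q ^ n) / (1 - x * q) := by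
  have h : 1 - x * q ≠ 0 :=
    one_sub_ne_zero (by simpa using (norm_mul_pow_le hq 1).trans_lt hx)
  rw [← one_sub_mul_qPoch_mul, mul_div_cancel_left₀ _ h, sq, mul_assoc]

lemma isContiguousFamily_inv_qPoch (hq : ‖q‖ < 1) :
    IsContiguousFamily q fun N x => (qPoch q q N)⁻¹ * (qPoch x q N)⁻¹ where
  apply_zero x := by simp [qPoch_zero]
  apply_succ N x hx := by
    have hxq : ‖x * q‖ < 1 := by simpa using (norm_mul_pow_le hq.le 1).trans_lt hx
    have hx_ne := one_sub_ne_zero hx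
    have hxq_ne := one_sub_ne_zero hxq
    have hxqN_ne := one_sub_mul_pow_ne_zero hxq hq N
    have hqN_ne := one_sub_mul_pow_ne_zero hq hq N
    have hpoch_xq_ne := qPoch_ne_zero hxq hq N
    have hpoch_q_ne := qPoch_ne_zero hq hq N
    rw [qPoch_mul_sq_left hq.le hx, qPoch_succ' x, qPoch_succ, qPoch_succ (x * q)]
    generalize q ^ N = y at *
    generalize hdx : 1 - x = d₁ at *
    generalize hdxqN : 1 - x * q * y = d₃ at *
    generalize hdxq : 1 - x * q = d₂ at *
    generalize hdqN : 1 - q * y = d₄ at *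
    field_simp
    subst hdx hdxq hdxqN hdqN
    ring
  continuousAt N := continuousAt_const.mul <|
    (continuous_qPoch q N).continuousAt.inv₀ (by simp [qPoch_zero_left])

/-- The family whose convolution with `1 / (q;q)_n` gives Bailey's lemma. -/
noncomputable def baileyFamily (q : ℂ) (i : ℕ) (x : ℂ) : ℂ :=
  q ^ (i * (i - 1)) * x ^ i / (qPoch q q i * qPoch x q i)

lemma isContiguousFamily_baileyFamily (hq : ‖q‖ < 1) :
    IsContiguousFamily q (baileyFamily q) where
  apply_zero x := by simp [baileyFamily, qPoch_zero]
  apply_succ i x hx := by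
    have hxq : ‖x * q‖ < 1 := by simpa using (norm_mul_pow_le hq.le 1).trans_lt hx
    have hpow : q ^ ((i + 1) * i) = q ^ (i * (i - 1)) * (q ^ i) ^ 2 := by
      cases i with
      | zero => simp
      | succ i => rw [Nat.add_sub_cancel]; ring
    have hx_ne := one_sub_ne_zero hx
    have hxq_ne := one_sub_ne_zero hxq
    have hxqN_ne := one_sub_mul_pow_ne_zero hxq hq i
    have hqN_ne := one_sub_mul_pow_ne_zero hq hq i
    have hpoch_xq_ne := qPoch_ne_zero hxq hq i
    have hpoch_q_ne := qPoch_ne_zero hq hq i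
    simp only [baileyFamily, Nat.add_sub_cancel, hpow, qPoch_mul_sq_left hq.le hx, qPoch_succ' x,
      qPoch_succ q, qPoch_succ (x * q)]
    rw [show (x * q ^ 2) ^ i = x ^ i * (q ^ i) ^ 2 by ring,
      show (x * q) ^ (i + 1) = x ^ i * q ^ i * (x * q) by ring, pow_succ x]
    generalize q ^ i = y at *
    generalize hdx : 1 - x = d₁ at *
    generalize hdxqN : 1 - x * q * y = d₃ at *
    generalize hdxq : 1 - x * q = d₂ at *
    generalize hdqN : 1 - q * y = d₄ at *
    field_simp
    subst hdx hdxq hdxqN hdqN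
    ring
  continuousAt i := (by fun_prop : ContinuousAt _ _).div
    (continuousAt_const.mul (continuous_qPoch q i).continuousAt)
    (by simpa [qPoch_zero_left] using qPoch_ne_zero hq hq i)

theorem sum_antidiagonal_baileyFamily (hq : ‖q‖ < 1) (hx : ‖x‖ < 1) (N : ℕ) :
    ∑ p ∈ antidiagonal N, (qPoch q q p.2)⁻¹ * baileyFamily q p.1 x =
      (qPoch q q N)⁻¹ * (qPoch x q N)⁻¹ := by
  refine ((isContiguousFamily_baileyFamily hq).convolution (a := fun n => (qPoch q q n)⁻¹)
    (by simp [qPoch_zero])).eq_of_apply_zero_eq hq (isContiguousFamily_inv_qPoch hq) ?_ N hx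
  intro N
  cases N with
  | zero => simp [baileyFamily, qPoch_zero]
  | succ N => simp [Nat.sum_antidiagonal_succ, baileyFamily, qPoch_zero, qPoch_zero_left]

/-- The family whose convolution with `q ^ n / (q²;q²)_n` gives the change of base
`q ↦ q²` in a Bailey pair. -/
noncomputable def changeOfBaseFamily (q : ℂ) (i : ℕ) (x : ℂ) : ℂ :=
  qPoch (-x) q (2 * i) / (qPoch (q ^ 2) (q ^ 2) i * qPoch (x ^ 2) (q ^ 2) i)

lemma isContiguousFamily_changeOfBaseFamily (hq : ‖q‖ < 1) :
    IsContiguousFamily q (changeOfBaseFamily q) where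
  apply_zero x := by simp [changeOfBaseFamily, qPoch_zero]
  apply_succ i x hx := by
    have hq2 := norm_pow_lt_one hq two_ne_zero
    have hx2 := norm_pow_lt_one hx two_ne_zero
    have hx2q2 : ‖x ^ 2 * q ^ 2‖ < 1 := (norm_mul_pow_le hq.le 2).trans_lt hx2
    have hnum : qPoch (-x) q (2 * i + 2) =
        (1 + x) * (1 + x * q) * qPoch (-(x * q ^ 2)) q (2 * i) := by
      rw [qPoch_succ', qPoch_succ', show -x * q * q = -(x * q ^ 2) by ring]
      ring
    have hnum' : qPoch (-(x * q)) q (2 * i + 2) =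
        (1 + x * q) * qPoch (-(x * q ^ 2)) q (2 * i) * (1 + x * q ^ 2 * (q ^ i) ^ 2) := by
      rw [qPoch_succ', qPoch_succ, show -(x * q) * q = -(x * q ^ 2) by ring]
      ring
    have hx2q2i_ne := one_sub_mul_pow_ne_zero hx2q2 hq2 i
    have hq2i_ne := one_sub_mul_pow_ne_zero hq2 hq2 i
    have hpoch_x_ne := qPoch_ne_zero hx2q2 hq2 i
    have hpoch_q_ne := qPoch_ne_zero hq2 hq2 i
    have hx2_factor : 1 - x ^ 2 = (1 - x) * (1 + x) := by ring
    have hx2q2_factor : 1 - x ^ 2 * q ^ 2 = (1 - x * q) * (1 + x * q) := by ring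
    obtain ⟨hsub_x_ne, hadd_x_ne⟩ := mul_ne_zero_iff.mp (hx2_factor ▸ one_sub_ne_zero hx2)
    obtain ⟨hsub_xq_ne, hadd_xq_ne⟩ := mul_ne_zero_iff.mp (hx2q2_factor ▸ one_sub_ne_zero hx2q2)
    simp only [changeOfBaseFamily, mul_add_one, hnum, hnum', mul_pow x, ← pow_mul, mul_comm i]
    rw [pow_mul q 2 2, qPoch_mul_sq_left hq2.le hx2, qPoch_succ' (x ^ 2), qPoch_succ (q ^ 2),
      qPoch_succ (x ^ 2 * q ^ 2), hx2_factor, hx2q2_factor]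
    rw [← pow_mul, mul_comm 2 i, pow_mul q i] at *
    generalize q ^ i = y at *
    field_simp
    ring
  continuousAt i := ((continuous_qPoch q (2 * i)).comp continuous_neg).continuousAt.div
    (continuousAt_const.mul
      ((continuous_qPoch (q ^ 2) i).comp (continuous_pow 2)).continuousAt) <| by
    have hq2 := norm_pow_lt_one hq two_ne_zero
    simpa [qPoch_zero_left] using qPoch_ne_zero hq2 hq2 i

-- This is the coefficient of `z ^ N` in `1/(zq;q²)_∞ * 1/(z;q²)_∞ = 1/(z;q)_∞`.
theorem sum_antidiagonal_pow_div_qPoch_sq (hq : ‖q‖ < 1) (N : ℕ) :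
    ∑ p ∈ antidiagonal N, q ^ p.2 / qPoch (q ^ 2) (q ^ 2) p.2 * (qPoch (q ^ 2) (q ^ 2) p.1)⁻¹ =
      (qPoch q q N)⁻¹ := by
  have hq2 := norm_pow_lt_one hq two_ne_zero
  obtain ⟨u, hu⟩ : ∃ u : ℕ → ℂ, u = fun n => (qPoch (q ^ 2) (q ^ 2) n)⁻¹ := ⟨_, rfl⟩
  have hu_succ (n : ℕ) : u n = (1 - q ^ (2 * (n + 1))) * u (n + 1) := by
    simpa only [hu, pow_mul, pow_succ'] using
      inv_qPoch_eq_mul_inv_qPoch_succ (one_sub_mul_pow_ne_zero hq2 hq2 n)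
  suffices ∑ p ∈ antidiagonal N, q ^ p.2 * u p.2 * u p.1 = (qPoch q q N)⁻¹ by
    simpa only [hu, div_eq_mul_inv] using this
  induction N with
  | zero => simp [hu, qPoch_zero]
  | succ N ih =>
    have hswap : q ^ (N + 1) * ∑ p ∈ antidiagonal (N + 1), q ^ p.2 * u p.2 * u p.1 =
        ∑ p ∈ antidiagonal (N + 1), q ^ (2 * p.1) * (q ^ p.2 * u p.2 * u p.1) := by
      rw [← Nat.sum_antidiagonal_swap, mul_sum]
      refine sum_congr rfl fun p hp => ?_
      rw [← mem_antidiagonal.mp hp, Prod.fst_swap, Prod.snd_swap]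
      ring
    have hrec : (1 - q ^ (N + 1)) * ∑ p ∈ antidiagonal (N + 1), q ^ p.2 * u p.2 * u p.1 =
        (qPoch q q N)⁻¹ := by
      rw [sub_mul, one_mul, hswap, ← sum_sub_distrib, Nat.sum_antidiagonal_succ, ← ih]
      simp only [mul_zero, pow_zero, one_mul, sub_self, zero_add]
      exact sum_congr rfl fun p _ => by rw [hu_succ p.1]; ring
    have hN : 1 - q ^ (N + 1) ≠ 0 := one_sub_ne_zero (norm_pow_lt_one hq N.succ_ne_zero)
    rw [qPoch_succ, ← pow_succ', mul_inv, ← hrec, mul_right_comm, mul_inv_cancel₀ hN, one_mul]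

theorem sum_antidiagonal_changeOfBaseFamily (hq : ‖q‖ < 1) (hx : ‖x‖ < 1) (N : ℕ) :
    ∑ p ∈ antidiagonal N, q ^ p.2 / qPoch (q ^ 2) (q ^ 2) p.2 * changeOfBaseFamily q p.1 x =
      (qPoch q q N)⁻¹ * (qPoch x q N)⁻¹ := by
  refine ((isContiguousFamily_changeOfBaseFamily hq).convolution
    (a := fun n => q ^ n / qPoch (q ^ 2) (q ^ 2) n) (by simp [qPoch_zero])).eq_of_apply_zero_eq hq
    (isContiguousFamily_inv_qPoch hq) (fun N => ?_) N hx
  simpa [changeOfBaseFamily, qPoch_zero_left] using sum_antidiagonal_pow_div_qPoch_sq hq N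

end Contiguity

section Kernels

variable {q : ℂ}

lemma sum_mul_qPochInv_mul_qPochInv {w : ℕ → ℕ → ℂ} {p : ℂ} {g : ℤ → ℂ} (hg : ∀ r, g (-r) = g r)
    (h : ∀ r N : ℕ, ∑ i ∈ range (N + 1), w (r + N) (r + i) *
        ((qPoch p p (2 * r + i))⁻¹ * (qPoch p p i)⁻¹) =
      g r * ((qPoch q q (2 * r + N))⁻¹ * (qPoch q q N)⁻¹)) (n : ℕ) (r : ℤ) :
    ∑ m ∈ range (n + 1), w n m * (qPochInv p (m + r) * qPochInv p (m - r)) =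
      g r * (qPochInv q (n + r) * qPochInv q (n - r)) := by
  wlog hr : 0 ≤ r generalizing r
  · simpa only [hg, sub_neg_eq_add, ← sub_eq_add_neg, mul_comm (qPochInv _ (_ - _))]
      using this (-r) (by omega)
  lift r to ℕ using hr
  have hvanish (m : ℕ) (hm : m < r) : w n m * (qPochInv p (m + r) * qPochInv p (m - r)) = 0 := by
    rw [qPochInv_of_neg p (m := m - r) (by omega), mul_zero, mul_zero]
  rcases lt_or_ge n r with hn | hn
  · rw [qPochInv_of_neg q (m := n - r) (by omega), mul_zero, mul_zero]
    exact sum_eq_zero fun m hm => hvanish m (by have := mem_range.mp hm; omega)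
  · obtain ⟨N, rfl⟩ := Nat.exists_eq_add_of_le hn
    have hcast (i : ℕ) : ((r + i : ℕ) + r : ℤ) = (2 * r + i : ℕ) ∧ ((r + i : ℕ) - r : ℤ) = i := by
      push_cast
      constructor <;> ring
    rw [add_assoc, sum_range_add, sum_eq_zero fun m hm => hvanish m (mem_range.mp hm), zero_add]
    simpa only [hcast, qPochInv_natCast] using h r N

/-- The kernel of the change of base `q ↦ q²` for the `β`-sides of Bailey pairs. -/
noncomputable def baseChangeKernel (q : ℂ) (n m : ℕ) : ℂ :=
  q ^ (n - m) * (qPoch (-q) q (2 * m) / qPoch (q ^ 2) (q ^ 2) (n - m))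

/-- The kernel of Bailey's lemma, with both free parameters sent to infinity. -/
noncomputable def baileyKernel (q : ℂ) (n m : ℕ) : ℂ := q ^ m ^ 2 / qPoch q q (n - m)

theorem sum_baseChangeKernel (hq : ‖q‖ < 1) (n : ℕ) (r : ℤ) :
    ∑ m ∈ range (n + 1),
        baseChangeKernel q n m * (qPochInv (q ^ 2) (m + r) * qPochInv (q ^ 2) (m - r)) =
      qPochInv q (n + r) * qPochInv q (n - r) := by
  rw [sum_mul_qPochInv_mul_qPochInv (q := q) (g := 1) (fun _ => rfl) (fun r N => ?_), Pi.one_apply,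
    one_mul]
  have h := sum_antidiagonal_changeOfBaseFamily hq (norm_pow_lt_one hq (2 * r).succ_ne_zero) N
  rw [Nat.sum_antidiagonal_eq_sum_range_succ (f := fun i j =>
    q ^ j / qPoch (q ^ 2) (q ^ 2) j * changeOfBaseFamily q i _)] at h
  have hneg_ne : qPoch (-q) q (2 * r) ≠ 0 := qPoch_ne_zero (by simpa using hq) hq _
  have hpoch_ne := qPoch_ne_zero hq hq (2 * r)
  rw [qPoch_add, ← pow_succ', mul_inv, mul_assoc, mul_comm (qPoch (q ^ _) q N)⁻¹, ← h, Pi.one_apply,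
    one_mul, mul_sum]
  refine sum_congr rfl fun i _ => ?_
  have hnum : qPoch (-q) q (2 * (r + i)) =
      qPoch (-q) q (2 * r) * qPoch (-q ^ (2 * r + 1)) q (2 * i) := by
    rw [mul_add, qPoch_add, neg_mul, pow_succ']
  have hden : qPoch (q ^ 2) (q ^ 2) (2 * r + i) =
      qPoch q q (2 * r) * qPoch (-q) q (2 * r) * qPoch ((q ^ (2 * r + 1)) ^ 2) (q ^ 2) i := by
    rw [qPoch_add, qPoch_mul_qPoch_neg, pow_right_comm q 2, ← mul_pow, pow_succ' q (2 * r)]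
  rw [baseChangeKernel, changeOfBaseFamily, Nat.add_sub_add_left, hnum, hden]
  field_simp

lemma sum_pow_div_qPoch_durfee (hq : ‖q‖ < 1) (R N : ℕ) :
    ∑ i ∈ range (N + 1),
        q ^ (i ^ 2 + R * i) / qPoch q q (N - i) * ((qPoch q q (R + i))⁻¹ * (qPoch q q i)⁻¹) =
      (qPoch q q (R + N))⁻¹ * (qPoch q q N)⁻¹ := by
  have h := sum_antidiagonal_baileyFamily hq (norm_pow_lt_one hq R.succ_ne_zero) N
  rw [Nat.sum_antidiagonal_eq_sum_range_succ (f := fun i j =>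
    (qPoch q q j)⁻¹ * baileyFamily q i _), Nat.succ_eq_add_one, Nat.succ_eq_add_one] at h
  have hpow (i : ℕ) : q ^ (i ^ 2 + R * i) = q ^ (i * (i - 1)) * (q ^ (R + 1)) ^ i := by
    cases i with
    | zero => simp
    | succ i => rw [Nat.add_sub_cancel]; ring
  simp only [qPoch_add q q R, ← pow_succ', mul_inv]
  rw [mul_assoc, mul_comm (qPoch (q ^ _) q N)⁻¹, ← h, mul_sum]
  refine sum_congr rfl fun i _ => ?_
  rw [hpow, baileyFamily, div_eq_mul_inv, div_eq_mul_inv, mul_inv]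
  ring

theorem sum_baileyKernel (hq : ‖q‖ < 1) (n : ℕ) (r : ℤ) :
    ∑ m ∈ range (n + 1), baileyKernel q n m * (qPochInv q (m + r) * qPochInv q (m - r)) =
      q ^ r ^ 2 * (qPochInv q (n + r) * qPochInv q (n - r)) := by
  refine sum_mul_qPochInv_mul_qPochInv (g := fun r => q ^ r ^ 2) (fun r => by rw [neg_sq])
    (fun r N => ?_) n r
  rw [← sum_pow_div_qPoch_durfee hq, mul_sum]
  refine sum_congr rfl fun i _ => ?_
  have hpow : q ^ (r + i) ^ 2 = q ^ (r : ℤ) ^ 2 * q ^ (i ^ 2 + 2 * r * i) := by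
    rw [← Nat.cast_pow, zpow_natCast, ← pow_add]
    ring_nf
  rw [baileyKernel, Nat.add_sub_add_left, hpow]
  ring

end Kernels

section Theta

/-- The general term of the theta series `∑ᵣ (-1)ʳ zʳ q^{r(r-1)/2}` summed by the Jacobi triple
product; the exponent is an exact integer division. -/
noncomputable def thetaTerm (z q : ℂ) (r : ℤ) : ℂ := (-1) ^ r * z ^ r * q ^ (r * (r - 1) / 2)

lemma two_mul_mul_pred_div_two (r : ℤ) : 2 * (r * (r - 1) / 2) = r * (r - 1) :=
  Int.mul_ediv_cancel' (Int.even_mul_pred_self r).two_dvd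

variable {z q : ℂ}

lemma thetaTerm_zero (z q : ℂ) : thetaTerm z q 0 = 1 := by simp [thetaTerm]

lemma thetaTerm_ne_zero (hz : z ≠ 0) (hq : q ≠ 0) (r : ℤ) : thetaTerm z q r ≠ 0 :=
  mul_ne_zero (mul_ne_zero (zpow_ne_zero r (by norm_num)) (zpow_ne_zero r hz)) (zpow_ne_zero _ hq)

lemma thetaTerm_add_one (hz : z ≠ 0) (hq : q ≠ 0) (r : ℤ) :
    thetaTerm z q (r + 1) = -(z * q ^ r) * thetaTerm z q r := by
  have h : (r + 1) * (r + 1 - 1) / 2 = r * (r - 1) / 2 + r := by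
    linarith [two_mul_mul_pred_div_two r, two_mul_mul_pred_div_two (r + 1)]
  rw [thetaTerm, thetaTerm, h, zpow_add₀ hq, zpow_add_one₀ hz, zpow_add_one₀ (by norm_num)]
  ring

lemma thetaTerm_neg (hz : z ≠ 0) (hq : q ≠ 0) (r : ℤ) :
    thetaTerm z q (-r) = thetaTerm (q / z) q r := by
  have h : -r * (-r - 1) / 2 = r * (r - 1) / 2 + r := by
    linarith [two_mul_mul_pred_div_two r, two_mul_mul_pred_div_two (-r)]
  rw [thetaTerm, thetaTerm, h, zpow_add₀ hq, zpow_neg, ← inv_zpow, inv_neg, inv_one, zpow_neg,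
    div_zpow]
  field_simp

lemma thetaTerm_one_left_one_sub (q : ℂ) (r : ℤ) : thetaTerm 1 q (1 - r) = -thetaTerm 1 q r := by
  rw [thetaTerm, thetaTerm, zpow_sub₀ (by norm_num), zpow_one, one_zpow, one_zpow, div_eq_mul_inv,
    ← inv_zpow, inv_neg, inv_one, show (1 - r) * (1 - r - 1) = r * (r - 1) by ring]
  ring

lemma zpow_mul_thetaTerm (w z q : ℂ) (r : ℤ) : w ^ r * thetaTerm z q r = thetaTerm (w * z) q r := by
  rw [thetaTerm, thetaTerm, mul_zpow]
  ring

lemma zpow_mul_pred_mul_thetaTerm (w z q : ℂ) (r : ℤ) :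
    w ^ (r * (r - 1)) * thetaTerm z q r = thetaTerm z (w ^ 2 * q) r := by
  rw [thetaTerm, thetaTerm, ← two_mul_mul_pred_div_two, zpow_mul, zpow_two, ← sq, mul_zpow,
    two_mul_mul_pred_div_two]
  ring

lemma zpow_sq_mul_thetaTerm {w : ℂ} (hw : w ≠ 0) (z q : ℂ) (r : ℤ) :
    w ^ r ^ 2 * thetaTerm z q r = thetaTerm (w * z) (w ^ 2 * q) r := by
  rw [← zpow_mul_pred_mul_thetaTerm, ← zpow_mul_thetaTerm, ← mul_assoc, ← zpow_add₀ hw]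
  ring_nf

lemma summable_thetaTerm (hz : z ≠ 0) (hq0 : q ≠ 0) (hq : ‖q‖ < 1) : Summable (thetaTerm z q) := by
  have hnat {z : ℂ} (hz : z ≠ 0) : Summable fun n : ℕ => thetaTerm z q n := by
    refine summable_of_ratio_test_tendsto_lt_one zero_lt_one
      (Eventually.of_forall fun n => thetaTerm_ne_zero hz hq0 n) ?_
    have hratio (n : ℕ) :
        ‖thetaTerm z q (n + 1 : ℕ)‖ / ‖thetaTerm z q n‖ = ‖z * q ^ n‖ := by
      rw [Nat.cast_succ, thetaTerm_add_one hz hq0, norm_mul, norm_neg, zpow_natCast,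
        mul_div_cancel_right₀ _ (norm_ne_zero_iff.mpr (thetaTerm_ne_zero hz hq0 n))]
    simp only [hratio]
    simpa only [mul_zero, norm_zero] using
      ((tendsto_pow_atTop_nhds_zero_of_norm_lt_one hq).const_mul z).norm
  refine .of_nat_of_neg (hnat hz) ?_
  simpa only [thetaTerm_neg hz hq0] using hnat (div_ne_zero hq0 hz)

end Theta

section BaileyTransform

/-- The bilateral Bailey transform `∑ᵣ αᵣ / ((q;q)_{a+r} (q;q)_{b-r})`. A sequence `β` forms a
Bailey pair with `α` relative to `1` when `β n` is its value at `(n, n)`, and relative to `q` when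
it is its value at `(n, n + 1)`, up to normalisation. -/
noncomputable def baileyTransform (q : ℂ) (α : ℤ → ℂ) (a b : ℤ) : ℂ :=
  ∑' r : ℤ, α r * (qPochInv q (a + r) * qPochInv q (b - r))

variable {q : ℂ}

lemma summable_baileyTransform (q : ℂ) (α : ℤ → ℂ) (a b : ℤ) :
    Summable fun r => α r * (qPochInv q (a + r) * qPochInv q (b - r)) := by
  refine summable_of_ne_finset_zero (s := Icc (-a) b) fun r hr => ?_
  rcases not_and_or.mp (mem_Icc.not.mp hr) with h | h
  · rw [qPochInv_of_neg q (by omega), zero_mul, mul_zero]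
  · rw [qPochInv_of_neg q (m := b - r) (by omega), mul_zero, mul_zero]

lemma baileyTransform_mul_left (q c : ℂ) (α : ℤ → ℂ) (a b : ℤ) :
    baileyTransform q (fun r => c * α r) a b = c * baileyTransform q α a b := by
  simp only [baileyTransform, mul_assoc, tsum_mul_left]

lemma baileyTransform_comp_neg (q : ℂ) (α : ℤ → ℂ) (a b : ℤ) :
    baileyTransform q (fun r => α (-r)) a b = baileyTransform q α b a := by
  unfold baileyTransform
  rw [← (Equiv.neg ℤ).tsum_eq]
  simp only [Equiv.neg_apply, neg_neg, sub_neg_eq_add, ← sub_eq_add_neg,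
    mul_comm (qPochInv q (a - _))]

lemma baileyTransform_sub_one_right (hq0 : q ≠ 0) (hq : ‖q‖ < 1) (α : ℤ → ℂ) (a b : ℤ) :
    baileyTransform q α a (b - 1) =
      baileyTransform q α a b - q ^ b * baileyTransform q (fun r => α r * q ^ (-r)) a b := by
  rw [← baileyTransform_mul_left, baileyTransform, baileyTransform, baileyTransform,
    ← (summable_baileyTransform q _ a b).tsum_sub (summable_baileyTransform q _ a b)]
  refine tsum_congr fun r => ?_
  rw [sub_right_comm, qPochInv_sub_one hq, sub_eq_add_neg b r, zpow_add₀ hq0]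
  ring

lemma sum_mul_baileyTransform {w : ℕ → ℂ} {p : ℂ} {g : ℤ → ℂ} {n : ℕ}
    (h : ∀ r : ℤ, ∑ m ∈ range (n + 1), w m * (qPochInv p (m + r) * qPochInv p (m - r)) =
      g r * (qPochInv q (n + r) * qPochInv q (n - r))) (α : ℤ → ℂ) :
    ∑ m ∈ range (n + 1), w m * baileyTransform p α m m =
      baileyTransform q (fun r => g r * α r) n n := by
  simp only [baileyTransform, ← tsum_mul_left]
  rw [← Summable.tsum_finsetSum
    (f := fun (m : ℕ) r => w m * (α r * (qPochInv p (m + r) * qPochInv p (m - r))))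
    fun m _ => (summable_baileyTransform p α m m).mul_left _]
  refine tsum_congr fun r => ?_
  rw [mul_right_comm, ← h r, sum_mul]
  exact sum_congr rfl fun m _ => by ring

theorem sum_baseChangeKernel_mul_baileyTransform (hq : ‖q‖ < 1) (α : ℤ → ℂ) (n : ℕ) :
    ∑ m ∈ range (n + 1), baseChangeKernel q n m * baileyTransform (q ^ 2) α m m =
      baileyTransform q α n n := by
  simpa only [one_mul] using sum_mul_baileyTransform (g := fun _ => 1)
    (fun r => by rw [sum_baseChangeKernel hq, one_mul]) α

theorem sum_baileyKernel_mul_baileyTransform (hq : ‖q‖ < 1) (α : ℤ → ℂ) (n : ℕ) :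
    ∑ m ∈ range (n + 1), baileyKernel q n m * baileyTransform q α m m =
      baileyTransform q (fun r => q ^ r ^ 2 * α r) n n :=
  sum_mul_baileyTransform (sum_baileyKernel hq n) α

section Antisymmetric

variable {γ : ℤ → ℂ} (hγ : ∀ r, γ (1 - r) = -γ r)
include hγ

lemma baileyTransform_mul_comp_one_sub (q : ℂ) (f : ℤ → ℂ) (n : ℤ) :
    baileyTransform q (fun r => γ r * f (1 - r)) n (n + 1) =
      -baileyTransform q (fun r => γ r * f r) n (n + 1) := by
  rw [baileyTransform, ← (Equiv.subLeft (1 : ℤ)).tsum_eq, baileyTransform, ← tsum_neg]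
  refine tsum_congr fun r => ?_
  rw [Equiv.subLeft_apply, hγ, sub_sub_cancel, show n + (1 - r) = n + 1 - r by ring,
    show n + 1 - (1 - r) = n + r by ring]
  ring

lemma baileyTransform_eq_zero_of_antisymm (q : ℂ) (n : ℤ) :
    baileyTransform q γ n (n + 1) = 0 := by
  have h := baileyTransform_mul_comp_one_sub hγ q 1 n
  simp only [Pi.one_apply, mul_one] at h
  exact self_eq_neg.mp h

lemma baileyTransform_mul_zpow_of_antisymm (hq0 : q ≠ 0) (hq : ‖q‖ < 1) (n : ℤ) :
    baileyTransform q (fun r => γ r * q ^ r) n n =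
      baileyTransform q (fun r => γ r * q ^ r) n (n + 1) := by
  have h := baileyTransform_sub_one_right hq0 hq (fun r => γ r * q ^ r) n (n + 1)
  simpa only [add_sub_cancel_right, mul_assoc, ← zpow_add₀ hq0, add_neg_cancel, zpow_zero, mul_one,
    baileyTransform_eq_zero_of_antisymm hγ, mul_zero, sub_zero] using h

lemma baileyTransform_of_antisymm (hq0 : q ≠ 0) (hq : ‖q‖ < 1) (n : ℤ) :
    baileyTransform q γ n n = q ^ n * baileyTransform q (fun r => γ r * q ^ r) n (n + 1) := by
  have h := baileyTransform_sub_one_right hq0 hq γ n (n + 1)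
  have hreflect : q * baileyTransform q (fun r => γ r * q ^ (-r)) n (n + 1) =
      -baileyTransform q (fun r => γ r * q ^ r) n (n + 1) := by
    rw [← baileyTransform_mul_comp_one_sub hγ, ← baileyTransform_mul_left]
    simp only [sub_eq_add_neg, zpow_add₀ hq0, zpow_one, mul_left_comm q]
  rw [add_sub_cancel_right, baileyTransform_eq_zero_of_antisymm hγ, zpow_add_one₀ hq0, mul_assoc,
    hreflect] at h
  rw [h]
  ring

theorem inv_zpow_mul_baileyTransform_of_antisymm (hq0 : q ≠ 0) (hq : ‖q‖ < 1) (n : ℤ) :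
    (q ^ n)⁻¹ * baileyTransform q γ n n = baileyTransform q (fun r => γ r * q ^ r) n n := by
  rw [baileyTransform_of_antisymm hγ hq0 hq, inv_mul_cancel_left₀ (zpow_ne_zero n hq0),
    baileyTransform_mul_zpow_of_antisymm hγ hq0 hq]

end Antisymmetric

end BaileyTransform

section TripleProduct

variable {z q : ℂ}

lemma one_sub_mul_baileyTransform_thetaTerm (hz : z ≠ 0) (hq0 : q ≠ 0) (hq : ‖q‖ < 1) (a b : ℤ) :
    (1 - q ^ (a + b + 1)) * baileyTransform q (thetaTerm z q) a (b + 1) =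
      (1 - z * q ^ b) * baileyTransform q (thetaTerm z q) a b := by
  have hshift : -(z * q ^ b) * baileyTransform q (thetaTerm z q) a b =
      baileyTransform q (fun r => q ^ (b + 1 - r) * thetaTerm z q r) (a - 1) (b + 1) := by
    rw [← baileyTransform_mul_left, baileyTransform, baileyTransform,
      ← (Equiv.addRight (1 : ℤ)).tsum_eq fun r => q ^ (b + 1 - r) * _ * _]
    refine tsum_congr fun r => ?_
    rw [Equiv.coe_addRight, thetaTerm_add_one hz hq0, add_sub_add_right_eq_sub,
      sub_add_add_cancel,
      show z * q ^ b = z * (q ^ (b - r) * q ^ r) by rw [← zpow_add₀ hq0, sub_add_cancel]]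
    ring
  rw [sub_eq_add_neg 1 (z * _), add_mul, one_mul, hshift,
    baileyTransform, baileyTransform, baileyTransform, ← tsum_mul_left,
    ← (summable_baileyTransform q _ a b).tsum_add (summable_baileyTransform q _ (a - 1) (b + 1))]
  -- `1 - q^(a+b+1) = (1 - q^(b+1-r)) + q^(b+1-r) * (1 - q^(a+r))`
  refine tsum_congr fun r => ?_
  rw [show b - r = b + 1 - r - 1 by ring, show a - 1 + r = a + r - 1 by ring,
    qPochInv_sub_one hq, qPochInv_sub_one hq, show a + b + 1 = a + r + (b + 1 - r) by ring,
    zpow_add₀ hq0]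
  ring

lemma qPoch_add_mul_baileyTransform_thetaTerm (hz : z ≠ 0) (hq0 : q ≠ 0) (hq : ‖q‖ < 1)
    (a b : ℕ) :
    qPoch q q (a + b) * baileyTransform q (thetaTerm z q) a b =
      qPoch z q b * (qPoch q q a * baileyTransform q (thetaTerm z q) a 0) := by
  induction b with
  | zero => rw [qPoch_zero, one_mul, add_zero, Nat.cast_zero]
  | succ b ih =>
    have h := one_sub_mul_baileyTransform_thetaTerm hz hq0 hq a b
    have hpow : q ^ (a + b + 1 : ℤ) = q * q ^ (a + b) := by
      rw [← pow_succ', ← zpow_natCast]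
      push_cast
      rfl
    rw [zpow_natCast, hpow] at h
    rw [← add_assoc, qPoch_succ, mul_assoc, Nat.cast_succ, h, mul_left_comm, ih, qPoch_succ]
    ring

lemma baileyTransform_thetaTerm_swap (hz : z ≠ 0) (hq0 : q ≠ 0) (a b : ℤ) :
    baileyTransform q (thetaTerm z q) a b = baileyTransform q (thetaTerm (q / z) q) b a := by
  rw [← baileyTransform_comp_neg]
  simp only [thetaTerm_neg hz hq0]

lemma baileyTransform_zero_zero (q : ℂ) (α : ℤ → ℂ) : baileyTransform q α 0 0 = α 0 := by
  rw [baileyTransform, tsum_eq_single 0]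
  · simp [qPochInv, qPoch_zero]
  · intro r hr
    rcases hr.lt_or_gt with h | h
    · rw [qPochInv_of_neg q (by omega), zero_mul, mul_zero]
    · rw [qPochInv_of_neg q (m := 0 - r) (by omega), mul_zero, mul_zero]

theorem qPoch_mul_baileyTransform_thetaTerm (hz : z ≠ 0) (hq0 : q ≠ 0) (hq : ‖q‖ < 1) (a b : ℕ) :
    qPoch q q (a + b) * baileyTransform q (thetaTerm z q) a b =
      qPoch z q b * qPoch (q / z) q a := by
  have h := qPoch_add_mul_baileyTransform_thetaTerm (div_ne_zero hq0 hz) hq0 hq 0 a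
  rw [← baileyTransform_thetaTerm_swap hz hq0, Nat.cast_zero, baileyTransform_zero_zero,
    thetaTerm_zero, qPoch_zero, mul_one, mul_one, zero_add] at h
  rw [qPoch_add_mul_baileyTransform_thetaTerm hz hq0 hq, h]

lemma tendsto_baileyTransform (hq : ‖q‖ < 1) {α : ℤ → ℂ} (hα : Summable α) :
    Tendsto (fun n : ℕ => baileyTransform q α n n) atTop
      (𝓝 ((∑' r, α r) * ((qPochInf q q)⁻¹ * (qPochInf q q)⁻¹))) := by
  obtain ⟨M, hM⟩ := exists_norm_qPochInv_le hq
  rw [← tsum_mul_right]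
  refine tendsto_tsum_of_dominated_convergence (hα.norm.mul_right (M * M)) (fun r => ?_)
    (.of_forall fun n r => ?_)
  · refine .const_mul _ (.mul ?_ ?_)
    · exact (tendsto_qPochInv hq).comp
        (tendsto_atTop_add_const_right _ r tendsto_natCast_atTop_atTop)
    · exact (tendsto_qPochInv hq).comp
        (tendsto_atTop_add_const_right _ (-r) tendsto_natCast_atTop_atTop)
  · rw [norm_mul, norm_mul]
    gcongr
    · exact (norm_nonneg _).trans (hM 0)
    · exact hM _
    · exact hM _

theorem tsum_thetaTerm (hz : z ≠ 0) (hq0 : q ≠ 0) (hq : ‖q‖ < 1) :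
    ∑' r, thetaTerm z q r = qPochInf q q * qPochInf z q * qPochInf (q / z) q := by
  have hdouble : Tendsto (fun n : ℕ => n + n) atTop atTop :=
    tendsto_atTop_mono (fun n => n.le_add_left n) tendsto_id
  have hleft := ((tendsto_qPoch q hq).comp hdouble).mul
    (tendsto_baileyTransform hq (summable_thetaTerm hz hq0 hq))
  have hright := (tendsto_qPoch z hq).mul (tendsto_qPoch (q / z) hq)
  have h := tendsto_nhds_unique
    (hleft.congr fun n => qPoch_mul_baileyTransform_thetaTerm hz hq0 hq n n) hright
  have hne := qPochInf_ne_zero hq hq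
  rw [mul_assoc, ← h]
  field_simp

lemma tsum_thetaTerm_pow (hq0 : q ≠ 0) (hq : ‖q‖ < 1) {a b : ℕ} (hb : b ≠ 0) (hab : a ≤ b) :
    ∑' r, thetaTerm (q ^ a) (q ^ b) r =
      qPochInf (q ^ b) (q ^ b) * qPochInf (q ^ a) (q ^ b) * qPochInf (q ^ (b - a)) (q ^ b) := by
  rw [tsum_thetaTerm (pow_ne_zero a hq0) (pow_ne_zero b hq0) (norm_pow_lt_one hq hb),
    pow_sub₀ q hq0 hab, div_eq_mul_inv]

end TripleProduct

section Limit

variable {q : ℂ}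

lemma exists_norm_baileyTransform_le (hq : ‖q‖ < 1) {α : ℤ → ℂ} (hα : Summable α) :
    ∃ M, ∀ a b, ‖baileyTransform q α a b‖ ≤ M := by
  obtain ⟨M, hM⟩ := exists_norm_qPochInv_le hq
  refine ⟨∑' r, ‖α r‖ * (M * M), fun a b =>
    tsum_of_norm_bounded (hα.norm.mul_right _).hasSum fun r => ?_⟩
  rw [norm_mul, norm_mul]
  gcongr
  · exact (norm_nonneg _).trans (hM 0)
  · exact hM _
  · exact hM _

lemma summable_pow_sq_mul_pow {r : ℝ} (hr0 : 0 ≤ r) (hr : r < 1) (A : ℝ) :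
    Summable fun n : ℕ => r ^ n ^ 2 * A ^ n := by
  have h : Tendsto (fun n : ℕ => r ^ n * A) atTop (𝓝 0) := by
    simpa only [zero_mul] using (tendsto_pow_atTop_nhds_zero_of_lt_one hr0 hr).mul_const A
  refine .of_norm_bounded_eventually_nat (g := fun n => (1 / 2 : ℝ) ^ n) summable_geometric_two ?_
  filter_upwards [h.norm.eventually_lt_const (u := 1 / 2) (by norm_num)] with n hn
  rw [sq, pow_mul, ← mul_pow, norm_pow]
  exact pow_le_pow_left₀ (norm_nonneg _) hn.le n

lemma norm_zpow_sq_le_one (hq : ‖q‖ ≤ 1) (r : ℤ) : ‖q ^ r ^ 2‖ ≤ 1 := by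
  rw [← Int.natAbs_sq, ← Nat.cast_pow, zpow_natCast, norm_pow]
  exact pow_le_one₀ (norm_nonneg q) hq

theorem tsum_pow_sq_mul_baileyTransform (hq : ‖q‖ < 1) {α : ℤ → ℂ} (hα : Summable α) :
    ∑' m : ℕ, q ^ m ^ 2 * baileyTransform q α m m =
      (∑' r, q ^ r ^ 2 * α r) / qPochInf q q := by
  have hα' : Summable fun r => q ^ r ^ 2 * α r := by
    refine .of_norm_bounded hα.norm fun r => ?_
    rw [norm_mul]
    exact mul_le_of_le_one_left (norm_nonneg _) (norm_zpow_sq_le_one hq.le r)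
  obtain ⟨M, hM⟩ := exists_norm_qPochInv_le hq
  obtain ⟨B, hB⟩ := exists_norm_baileyTransform_le hq hα
  have hfinite (n : ℕ) : ∑' m : ℕ, qPochInv q (n - m) * (q ^ m ^ 2 * baileyTransform q α m m) =
      baileyTransform q (fun r => q ^ r ^ 2 * α r) n n := by
    rw [← sum_baileyKernel_mul_baileyTransform hq, tsum_eq_sum (s := range (n + 1)) fun m hm => ?_]
    · refine sum_congr rfl fun m hm => ?_
      rw [baileyKernel, ← Nat.cast_sub (mem_range_succ_iff.mp hm), qPochInv_natCast]
      ring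
    · rw [qPochInv_of_neg q (by have := mem_range.not.mp hm; omega), zero_mul]
  have hlim : Tendsto
      (fun n : ℕ => ∑' m : ℕ, qPochInv q (n - m) * (q ^ m ^ 2 * baileyTransform q α m m)) atTop
      (𝓝 (∑' m : ℕ, (qPochInf q q)⁻¹ * (q ^ m ^ 2 * baileyTransform q α m m))) := by
    refine tendsto_tsum_of_dominated_convergence (bound := fun m => M * (‖q‖ ^ m ^ 2 * B))
      (((by simpa only [one_pow, mul_one] using summable_pow_sq_mul_pow (norm_nonneg q) hq 1 :
        Summable fun m : ℕ => ‖q‖ ^ m ^ 2).mul_right B).mul_left M) (fun m => ?_)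
      (.of_forall fun n m => ?_)
    · exact ((tendsto_qPochInv hq).comp
        (tendsto_atTop_add_const_right _ (-m : ℤ) tendsto_natCast_atTop_atTop)).mul_const _
    · rw [norm_mul, norm_mul, norm_pow]
      gcongr
      · exact (norm_nonneg _).trans (hM 0)
      · exact hM _
      · exact hB _ _
  simp only [hfinite] at hlim
  have h := tendsto_nhds_unique hlim (tendsto_baileyTransform hq hα')
  rw [tsum_mul_left, mul_left_comm] at h
  rw [div_eq_mul_inv]
  exact mul_left_cancel₀ (inv_ne_zero (qPochInf_ne_zero hq hq)) h

lemma tsum_pow_sq_mul_baileyTransform_thetaTerm (hq0 : q ≠ 0) (hq : ‖q‖ < 1) {a b : ℕ}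
    (hb : b ≠ 0) (hab : a ≤ b + 1) :
    ∑' m : ℕ, q ^ m ^ 2 * baileyTransform q (thetaTerm (q ^ a) (q ^ b)) m m =
      qPochInf (q ^ (b + 2)) (q ^ (b + 2)) * qPochInf (q ^ (a + 1)) (q ^ (b + 2)) *
        qPochInf (q ^ (b + 1 - a)) (q ^ (b + 2)) / qPochInf q q := by
  have hshift (r : ℤ) :
      q ^ r ^ 2 * thetaTerm (q ^ a) (q ^ b) r = thetaTerm (q ^ (a + 1)) (q ^ (b + 2)) r := by
    rw [zpow_sq_mul_thetaTerm hq0, ← pow_succ', ← pow_add, add_comm 2]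
  rw [tsum_pow_sq_mul_baileyTransform hq
    (summable_thetaTerm (pow_ne_zero a hq0) (pow_ne_zero b hq0) (norm_pow_lt_one hq hb))]
  simp only [hshift]
  rw [tsum_thetaTerm_pow hq0 hq (b + 1).succ_ne_zero (by omega),
    show b + 2 - (a + 1) = b + 1 - a by omega]

end Limit

section NestedSum

/-- The sum of `f 0 n m₁ * f 1 m₁ m₂ * ⋯ * f (L - 1) m_{L-1} 0` over all chains
`n ≥ m₁ ≥ ⋯ ≥ m_{L-1} ≥ 0`. The case `L = 0` is the empty product restricted to `n = 0`. -/
def nestedSum {R : Type*} [CommSemiring R] : ℕ → (ℕ → ℕ → ℕ → R) → ℕ → R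
  | 0, _, n => if n = 0 then 1 else 0
  | L + 1, f, n => ∑ m ∈ range (n + 1), f 0 n m * nestedSum L (fun i => f (i + 1)) m

/-- The kernel of the `i`-th change of base, with the extra factor `q ^ (-2ʲ n)` when `i = j`. -/
noncomputable def twistedKernel (q : ℂ) (j i n m : ℕ) : ℂ :=
  (if i = j then ((q ^ 2 ^ i) ^ n)⁻¹ else 1) * baseChangeKernel (q ^ 2 ^ i) n m

lemma pow_two_pow_succ (q : ℂ) (i : ℕ) : q ^ 2 ^ (i + 1) = (q ^ 2) ^ 2 ^ i := by
  rw [pow_succ', pow_mul]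

lemma twistedKernel_succ_succ (q : ℂ) (j i : ℕ) :
    twistedKernel q (j + 1) (i + 1) = twistedKernel (q ^ 2) j i := by
  funext n m
  simp only [twistedKernel, pow_two_pow_succ, add_left_inj]

lemma twistedKernel_zero_succ (q : ℂ) (i : ℕ) :
    twistedKernel q 0 (i + 1) = baseChangeKernel ((q ^ 2) ^ 2 ^ i) := by
  funext n m
  simp only [twistedKernel, pow_two_pow_succ, i.succ_ne_zero, if_false, one_mul]

variable {q : ℂ}

lemma baileyTransform_thetaTerm_one (hq0 : q ≠ 0) (hq : ‖q‖ < 1) (n : ℕ) :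
    baileyTransform q (thetaTerm 1 q) n n = if n = 0 then 1 else 0 := by
  have h := qPoch_mul_baileyTransform_thetaTerm one_ne_zero hq0 hq n n
  cases n with
  | zero => rw [Nat.cast_zero, baileyTransform_zero_zero, thetaTerm_zero, if_pos rfl]
  | succ n =>
    rw [qPoch_succ' 1, sub_self, zero_mul, zero_mul] at h
    rw [if_neg n.succ_ne_zero]
    exact (mul_eq_zero.mp h).resolve_left (qPoch_ne_zero hq hq _)

theorem nestedSum_baseChangeKernel (hq0 : q ≠ 0) (hq : ‖q‖ < 1) (k n : ℕ) :
    nestedSum k (fun i => baseChangeKernel (q ^ 2 ^ i)) n =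
      baileyTransform q (thetaTerm 1 (q ^ 2 ^ k)) n n := by
  induction k generalizing q n with
  | zero => rw [nestedSum, pow_zero, pow_one, baileyTransform_thetaTerm_one hq0 hq]
  | succ k ih =>
    simp only [nestedSum, pow_zero, pow_one, pow_two_pow_succ,
      ih (pow_ne_zero 2 hq0) (norm_pow_lt_one hq two_ne_zero)]
    exact sum_baseChangeKernel_mul_baileyTransform hq _ n

theorem nestedSum_twistedKernel (hq0 : q ≠ 0) (hq : ‖q‖ < 1) {j k : ℕ} (hjk : j < k) (n : ℕ) :
    nestedSum k (twistedKernel q j) n =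
      baileyTransform q (thetaTerm (q ^ 2 ^ j) (q ^ 2 ^ k)) n n := by
  induction j generalizing q k n with
  | zero =>
    obtain ⟨k, rfl⟩ := Nat.exists_eq_succ_of_ne_zero hjk.ne'
    have hfactor (m : ℕ) : twistedKernel q 0 0 n m = (q ^ n)⁻¹ * baseChangeKernel q n m := by
      rw [twistedKernel, if_pos rfl, pow_zero, pow_one]
    simp only [nestedSum, hfactor, twistedKernel_zero_succ, mul_assoc, ← mul_sum,
      nestedSum_baseChangeKernel (pow_ne_zero 2 hq0) (norm_pow_lt_one hq two_ne_zero)]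
    rw [sum_baseChangeKernel_mul_baileyTransform hq, ← zpow_natCast,
      inv_zpow_mul_baileyTransform_of_antisymm (thetaTerm_one_left_one_sub _) hq0 hq]
    simp only [mul_comm (thetaTerm _ _ _), zpow_mul_thetaTerm, pow_two_pow_succ, pow_zero, pow_one,
      mul_one]
  | succ j ih =>
    obtain ⟨k, rfl⟩ := Nat.exists_eq_succ_of_ne_zero (Nat.ne_zero_of_lt hjk)
    have hfactor (m : ℕ) : twistedKernel q (j + 1) 0 n m = baseChangeKernel q n m := by
      rw [twistedKernel, if_neg j.succ_ne_zero.symm, one_mul, pow_zero, pow_one]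
    simp only [nestedSum, hfactor, twistedKernel_succ_succ, pow_two_pow_succ,
      ih (pow_ne_zero 2 hq0) (norm_pow_lt_one hq two_ne_zero) (Nat.lt_of_succ_lt_succ hjk)]
    exact sum_baseChangeKernel_mul_baileyTransform hq _ n

end NestedSum

section AntitoneTuples

/-- A tuple viewed as an infinite sequence by appending zeros. -/
def extendByZero {L : ℕ} (s : Fin L → ℕ) (m : ℕ) : ℕ := if h : m < L then s ⟨m, h⟩ else 0

lemma extendByZero_of_ge {L : ℕ} (s : Fin L → ℕ) {m : ℕ} (hm : L ≤ m) : extendByZero s m = 0 :=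
  dif_neg hm.not_gt

lemma extendByZero_zero {L : ℕ} (s : Fin (L + 1) → ℕ) : extendByZero s 0 = s 0 :=
  dif_pos L.succ_pos

lemma extendByZero_vecCons_succ {L : ℕ} (n : ℕ) (s : Fin L → ℕ) (m : ℕ) :
    extendByZero (Matrix.vecCons n s) (m + 1) = extendByZero s m := by
  by_cases h : m < L
  · rw [extendByZero, extendByZero, dif_pos h, dif_pos (Nat.succ_lt_succ h)]
    rfl
  · rw [extendByZero_of_ge s (not_lt.mp h), extendByZero_of_ge _ (Nat.succ_le_succ (not_lt.mp h))]

lemma antitone_extendByZero {L : ℕ} {s : Fin L → ℕ} (hs : Antitone s) :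
    Antitone (extendByZero s) := by
  refine antitone_nat_of_succ_le fun m => ?_
  rcases lt_or_ge (m + 1) L with h | h
  · rw [extendByZero, extendByZero, dif_pos h, dif_pos (m.lt_succ_self.trans h)]
    exact hs (Fin.mk_le_mk.mpr m.le_succ)
  · rw [extendByZero_of_ge s h]
    exact Nat.zero_le _

open Classical in
/-- The antitone tuples of length `L + 1` with first entry `n`. -/
noncomputable def antitoneTuples (L n : ℕ) : Finset (Fin (L + 1) → ℕ) :=
  {s ∈ Fintype.piFinset fun _ => range (n + 1) | Antitone s ∧ s 0 = n}

lemma mem_antitoneTuples {L n : ℕ} {s : Fin (L + 1) → ℕ} :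
    s ∈ antitoneTuples L n ↔ Antitone s ∧ s 0 = n := by
  rw [antitoneTuples, mem_filter, Fintype.mem_piFinset, and_iff_right_iff_imp]
  rintro ⟨hs, rfl⟩ i
  exact mem_range_succ_iff.mpr (hs i.zero_le)

lemma antitoneTuples_zero (n : ℕ) : antitoneTuples 0 n = {fun _ => n} := by
  ext s
  rw [mem_antitoneTuples, mem_singleton, funext_iff, Fin.forall_fin_one, and_iff_right]
  exact Fin.forall_fin_one.mpr (Fin.forall_fin_one.mpr fun _ => le_rfl)

lemma sum_antitoneTuples_succ {R : Type*} [AddCommMonoid R] (L n : ℕ)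
    (φ : (Fin (L + 2) → ℕ) → R) :
    ∑ s ∈ antitoneTuples (L + 1) n, φ s =
      ∑ m ∈ range (n + 1), ∑ s ∈ antitoneTuples L m, φ (Matrix.vecCons n s) := by
  rw [sum_sigma']
  refine (sum_bij' (fun x _ => Matrix.vecCons n x.2) (fun s _ => ⟨s 1, Matrix.vecTail s⟩)
    ?_ ?_ ?_ ?_ fun _ _ => rfl).symm
  · rintro ⟨m, s⟩ h
    obtain ⟨hm, hs, rfl⟩ : m ∈ range (n + 1) ∧ Antitone s ∧ s 0 = m := by
      simpa only [mem_sigma, mem_antitoneTuples] using h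
    exact mem_antitoneTuples.mpr ⟨antitone_vecCons.mpr ⟨mem_range_succ_iff.mp hm, hs⟩, rfl⟩
  · intro s h
    obtain ⟨hs, rfl⟩ := mem_antitoneTuples.mp h
    exact mem_sigma.mpr ⟨mem_range_succ_iff.mpr (hs (Fin.zero_le 1)),
      mem_antitoneTuples.mpr ⟨hs.comp_monotone Fin.strictMono_succ.monotone, rfl⟩⟩
  · rintro ⟨m, s⟩ h
    obtain ⟨-, rfl⟩ : Antitone s ∧ s 0 = m := mem_antitoneTuples.mp (mem_sigma.mp h).2
    rfl
  · intro s h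
    obtain ⟨-, rfl⟩ := mem_antitoneTuples.mp h
    exact Matrix.cons_head_tail s

theorem sum_antitoneTuples_prod {R : Type*} [CommSemiring R] (L : ℕ) (f : ℕ → ℕ → ℕ → R) (n : ℕ) :
    ∑ s ∈ antitoneTuples L n,
        ∏ i ∈ range (L + 1), f i (extendByZero s i) (extendByZero s (i + 1)) =
      nestedSum (L + 1) f n := by
  induction L generalizing f n with
  | zero =>
    rw [antitoneTuples_zero, sum_singleton, prod_range_one, extendByZero_zero,
      extendByZero_of_ge _ le_rfl]
    simp only [nestedSum, mul_ite, mul_one, mul_zero, sum_ite_eq', mem_range, n.succ_pos, if_true]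
  | succ L ih =>
    rw [sum_antitoneTuples_succ, nestedSum]
    refine sum_congr rfl fun m _ => ?_
    rw [← ih, mul_sum]
    refine sum_congr rfl fun s hs => ?_
    simp only [prod_range_succ' _ (L + 1), extendByZero_vecCons_succ, extendByZero_zero,
      (mem_antitoneTuples.mp hs).2, Matrix.cons_val_zero, mul_comm]

/-- The antitone tuples, fibred over the first entry. -/
noncomputable def sigmaAntitoneTuplesEquiv (L : ℕ) :
    (Σ n, antitoneTuples L n) ≃ {s : Fin (L + 1) → ℕ // Antitone s} where
  toFun x := ⟨x.2, (mem_antitoneTuples.mp x.2.2).1⟩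
  invFun s := ⟨s.1 0, s.1, mem_antitoneTuples.mpr ⟨s.2, rfl⟩⟩
  left_inv := by
    rintro ⟨n, s, hs⟩
    obtain ⟨-, rfl⟩ := mem_antitoneTuples.mp hs
    rfl
  right_inv _ := rfl

theorem tsum_antitone_mul_prod (L : ℕ) (w : ℕ → ℂ) (f : ℕ → ℕ → ℕ → ℂ)
    (h : Summable fun n => ‖w n‖ * nestedSum (L + 1) (fun i n m => ‖f i n m‖) n) :
    ∑' s : {s : Fin (L + 1) → ℕ // Antitone s}, w (extendByZero s.1 0) *
        ∏ i ∈ range (L + 1), f i (extendByZero s.1 i) (extendByZero s.1 (i + 1)) =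
      ∑' n, w n * nestedSum (L + 1) f n := by
  have hfibre {R : Type} [CommSemiring R] (w : ℕ → R) (f : ℕ → ℕ → ℕ → R) (n : ℕ) :
      ∑ s : antitoneTuples L n, w (extendByZero s.1 0) *
          ∏ i ∈ range (L + 1), f i (extendByZero s.1 i) (extendByZero s.1 (i + 1)) =
        w n * nestedSum (L + 1) f n := by
    rw [← sum_antitoneTuples_prod, mul_sum]
    refine Eq.trans (sum_congr rfl fun s _ => ?_) (sum_attach _ _)
    rw [extendByZero_zero, (mem_antitoneTuples.mp s.2).2]
  rw [← (sigmaAntitoneTuplesEquiv L).tsum_eq, Summable.tsum_sigma]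
  · exact tsum_congr fun n => (tsum_fintype _).trans (hfibre w f n)
  · refine .of_norm ((summable_sigma_of_nonneg fun _ => norm_nonneg _).mpr
      ⟨fun n => (hasSum_fintype _).summable, h.congr fun n => ?_⟩)
    simp only [norm_mul, norm_prod, tsum_fintype]
    exact (hfibre (fun n => ‖w n‖) (fun i n m => ‖f i n m‖) n).symm

end AntitoneTuples

section Summability

lemma nestedSum_nonneg {f : ℕ → ℕ → ℕ → ℝ} (hf : ∀ i n m, 0 ≤ f i n m) (L n : ℕ) :
    0 ≤ nestedSum L f n := by
  induction L generalizing f n with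
  | zero =>
    rw [nestedSum]
    split_ifs
    exacts [zero_le_one, le_rfl]
  | succ L ih => exact sum_nonneg fun m _ => mul_nonneg (hf 0 n m) (ih (fun i => hf (i + 1)) m)

lemma exists_nestedSum_le {f : ℕ → ℕ → ℕ → ℝ} (hf0 : ∀ i n m, 0 ≤ f i n m)
    (hf : ∀ i, ∃ A ≥ 1, ∀ n m, f i n m ≤ A ^ (n + 1)) (L : ℕ) :
    ∃ A ≥ 1, ∀ n, nestedSum L f n ≤ A ^ (n + 1) := by
  induction L generalizing f with
  | zero =>
    refine ⟨1, le_rfl, fun n => ?_⟩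
    rw [nestedSum, one_pow]
    split_ifs
    exacts [le_rfl, zero_le_one]
  | succ L ih =>
    obtain ⟨A, hA, hfA⟩ := hf 0
    obtain ⟨B, hB, hfB⟩ := ih (fun i => hf0 (i + 1)) fun i => hf (i + 1)
    refine ⟨2 * (A * B), by nlinarith, fun n => ?_⟩
    calc nestedSum (L + 1) f n
        ≤ ∑ _ ∈ range (n + 1), A ^ (n + 1) * B ^ (n + 1) := by
          refine sum_le_sum fun m hm => ?_
          gcongr
          · exact nestedSum_nonneg (fun i => hf0 (i + 1)) L m
          · exact hfA n m
          · exact (hfB m).trans (pow_le_pow_right₀ hB (mem_range.mp hm))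
      _ = (n + 1 : ℕ) * (A * B) ^ (n + 1) := by
          rw [sum_const, card_range, nsmul_eq_mul, mul_pow]
      _ ≤ (2 * (A * B)) ^ (n + 1) := by
          rw [mul_pow 2]
          gcongr
          exact_mod_cast Nat.lt_two_pow_self.le

variable {q : ℂ}

lemma exists_norm_baileyKernel_le (hq : ‖q‖ < 1) :
    ∃ A ≥ 1, ∀ n m, ‖baileyKernel q n m‖ ≤ A ^ (n + 1) := by
  obtain ⟨M, hM⟩ := exists_norm_inv_qPoch_le hq hq
  refine ⟨max 1 M, le_max_left 1 M, fun n m => ?_⟩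
  calc ‖baileyKernel q n m‖ = ‖q ^ m ^ 2‖ * ‖(qPoch q q (n - m))⁻¹‖ := by
        rw [baileyKernel, div_eq_mul_inv, norm_mul]
    _ ≤ 1 * max 1 M := by
        gcongr
        · rw [norm_pow]
          exact pow_le_one₀ (norm_nonneg q) hq.le
        · exact (hM _).trans (le_max_right 1 M)
    _ ≤ max 1 M ^ (n + 1) := by
        rw [one_mul]
        exact le_self_pow₀ (le_max_left 1 M) n.succ_ne_zero

lemma exists_norm_baseChangeKernel_le (hq : ‖q‖ < 1) :
    ∃ A ≥ 1, ∀ n m, ‖baseChangeKernel q n m‖ ≤ A ^ (n + 1) := by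
  obtain ⟨M, hM⟩ := exists_norm_qPoch_le (-q) hq
  have hq2 := norm_pow_lt_one hq two_ne_zero
  obtain ⟨B, hB⟩ := exists_norm_inv_qPoch_le hq2 hq2
  have hM0 : 0 ≤ M := (norm_nonneg _).trans (hM 0)
  refine ⟨max 1 (M * B), le_max_left 1 _, fun n m => ?_⟩
  calc ‖baseChangeKernel q n m‖
      = ‖q ^ (n - m)‖ * (‖qPoch (-q) q (2 * m)‖ * ‖(qPoch (q ^ 2) (q ^ 2) (n - m))⁻¹‖) := by
        rw [baseChangeKernel, div_eq_mul_inv, norm_mul, norm_mul]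
    _ ≤ 1 * (M * B) := by
        gcongr
        · rw [norm_pow]
          exact pow_le_one₀ (norm_nonneg q) hq.le
        · exact hM _
        · exact hB _
    _ ≤ max 1 (M * B) ^ (n + 1) := by
        rw [one_mul]
        exact (le_max_right 1 _).trans (le_self_pow₀ (le_max_left 1 _) n.succ_ne_zero)

lemma exists_norm_baseChangeKernel_two_pow_le (hq : ‖q‖ < 1) (i : ℕ) :
    ∃ A ≥ 1, ∀ n m, ‖baseChangeKernel (q ^ 2 ^ i) n m‖ ≤ A ^ (n + 1) :=
  exists_norm_baseChangeKernel_le (norm_pow_lt_one hq (pow_ne_zero i two_ne_zero))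

lemma exists_norm_twistedKernel_le (hq0 : q ≠ 0) (hq : ‖q‖ < 1) (j i : ℕ) :
    ∃ A ≥ 1, ∀ n m, ‖twistedKernel q j i n m‖ ≤ A ^ (n + 1) := by
  have hQ := norm_pow_lt_one hq (pow_ne_zero i two_ne_zero)
  obtain ⟨A, hA, hbound⟩ := exists_norm_baseChangeKernel_two_pow_le hq i
  have hinv : 1 ≤ ‖q ^ 2 ^ i‖⁻¹ :=
    (one_le_inv₀ (norm_pos_iff.mpr (pow_ne_zero _ hq0))).mpr hQ.le
  refine ⟨‖q ^ 2 ^ i‖⁻¹ * A, one_le_mul_of_one_le_of_one_le hinv hA, fun n m => ?_⟩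
  rw [twistedKernel, norm_mul, mul_pow]
  gcongr
  · split_ifs
    · rw [norm_inv, norm_pow, ← inv_pow]
      exact pow_le_pow_right₀ hinv n.le_succ
    · rw [norm_one]
      exact one_le_pow₀ hinv
  · exact hbound n m

/-- The kernels of a Bailey chain: the Bailey lemma, followed by the steps `f`. -/
noncomputable def baileyChainKernel (q : ℂ) (f : ℕ → ℕ → ℕ → ℂ) : ℕ → ℕ → ℕ → ℂ
  | 0 => baileyKernel q
  | i + 1 => f i

lemma summable_mul_nestedSum_baileyChainKernel (hq : ‖q‖ < 1) {f : ℕ → ℕ → ℕ → ℂ}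
    (hf : ∀ i, ∃ A ≥ 1, ∀ n m, ‖f i n m‖ ≤ A ^ (n + 1)) (L δ : ℕ) :
    Summable fun n : ℕ => ‖q ^ (n ^ 2 + δ * n)‖ *
      nestedSum L (fun i n m => ‖baileyChainKernel q f i n m‖) n := by
  have hnonneg (i n m : ℕ) : 0 ≤ ‖baileyChainKernel q f i n m‖ := norm_nonneg _
  obtain ⟨A, -, hbound⟩ := exists_nestedSum_le hnonneg
    (Nat.rec (exists_norm_baileyKernel_le hq) fun i _ => hf i) L
  refine .of_nonneg_of_le (fun n => mul_nonneg (norm_nonneg _) (nestedSum_nonneg hnonneg L n))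
    (fun n => ?_) ((summable_pow_sq_mul_pow (norm_nonneg q) hq A).mul_right A)
  rw [mul_assoc, ← pow_succ, norm_pow]
  gcongr ?_ * ?_
  · exact nestedSum_nonneg hnonneg L n
  · exact pow_le_pow_of_le_one (norm_nonneg q) hq.le le_self_add
  · exact hbound n

end Summability

section Multisum

/-- The summand of the multisum, as a function of the sequence `t 0 ≥ t 1 ≥ ⋯`; the integer `e`
perturbs the exponent of `q`. -/
noncomputable def multisumTerm (q : ℂ) (k : ℕ) (e : ℤ) (t : ℕ → ℕ) : ℂ :=
  q ^ ((t 0 : ℤ) ^ 2 + (t 1 : ℤ) ^ 2 + t 1 + ∑ m ∈ Ico 2 (k + 1), (2 : ℤ) ^ (m - 2) * t m + e) /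
    qPoch q q (t 0 - t 1) *
    ∏ i ∈ Ico 2 (k + 2), qPoch (-(q ^ 2 ^ (i - 2))) (q ^ 2 ^ (i - 2)) (2 * t i) /
      qPoch (q ^ 2 ^ (i - 1)) (q ^ 2 ^ (i - 1)) (t (i - 1) - t i)

lemma sum_two_pow_mul_sub {u : ℕ → ℕ} (hu : Antitone u) (k : ℕ) :
    ∑ i ∈ range (k + 1), 2 ^ i * (u i - u (i + 1)) + 2 ^ k * u (k + 1) =
      u 0 + ∑ i ∈ range k, 2 ^ i * u (i + 1) := by
  induction k with
  | zero => simpa using Nat.sub_add_cancel (hu zero_le_one)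
  | succ k ih =>
    obtain ⟨d, hd⟩ := Nat.exists_eq_add_of_le (hu (k + 1).le_succ)
    rw [sum_range_succ, sum_range_succ (fun i => 2 ^ i * u (i + 1)), ← add_assoc, ← ih, hd,
      Nat.add_sub_cancel_left]
    ring

variable {q : ℂ} {k : ℕ}

lemma prod_baseChangeKernel (q : ℂ) (hk : k ≠ 0) {t : ℕ → ℕ} (ht : Antitone t)
    (htk : t (k + 1) = 0) :
    ∏ i ∈ range k, baseChangeKernel (q ^ 2 ^ i) (t (i + 1)) (t (i + 2)) =
      q ^ (t 1 + ∑ m ∈ Ico 2 (k + 1), 2 ^ (m - 2) * t m) *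
        ∏ i ∈ Ico 2 (k + 2), qPoch (-(q ^ 2 ^ (i - 2))) (q ^ 2 ^ (i - 2)) (2 * t i) /
          qPoch (q ^ 2 ^ (i - 1)) (q ^ 2 ^ (i - 1)) (t (i - 1) - t i) := by
  obtain ⟨k, rfl⟩ := Nat.exists_eq_succ_of_ne_zero hk
  have hexp : ∑ i ∈ range (k + 1), 2 ^ i * (t (i + 1) - t (i + 2)) =
      t 1 + ∑ m ∈ Ico 2 (k + 2), 2 ^ (m - 2) * t m := by
    have h := sum_two_pow_mul_sub (fun a b hab => ht (Nat.succ_le_succ hab)) k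
    rw [htk, mul_zero, add_zero] at h
    simp only [h, sum_Ico_eq_sum_range, Nat.add_sub_cancel, add_comm 2]
  rw [← hexp, ← prod_pow_eq_pow_sum, prod_Ico_eq_prod_range, Nat.add_sub_cancel, ← prod_mul_distrib]
  refine prod_congr rfl fun i _ => ?_
  rw [baseChangeKernel, ← pow_mul, ← pow_mul, ← pow_succ, Nat.add_sub_cancel_left, add_comm 2 i]
  rfl

lemma multisumTerm_eq (hq0 : q ≠ 0) (hk : k ≠ 0) (e : ℤ) {t : ℕ → ℕ} (ht : Antitone t)
    (htk : t (k + 1) = 0) :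
    multisumTerm q k e t = q ^ t 0 ^ 2 * baileyKernel q (t 0) (t 1) *
      (q ^ e * ∏ i ∈ range k, baseChangeKernel (q ^ 2 ^ i) (t (i + 1)) (t (i + 2))) := by
  have hexp : (t 0 : ℤ) ^ 2 + (t 1 : ℤ) ^ 2 + t 1 +
      ∑ m ∈ Ico 2 (k + 1), (2 : ℤ) ^ (m - 2) * t m + e =
      (t 0 ^ 2 : ℕ) + (t 1 ^ 2 : ℕ) + (t 1 + ∑ m ∈ Ico 2 (k + 1), 2 ^ (m - 2) * t m : ℕ) + e := by
    push_cast
    ring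
  rw [multisumTerm, hexp, zpow_add₀ hq0, zpow_add₀ hq0, zpow_add₀ hq0, zpow_natCast, zpow_natCast,
    zpow_natCast, prod_baseChangeKernel q hk ht htk, baileyKernel]
  ring

theorem tsum_multisumTerm_eq_tsum_nestedSum (hq0 : q ≠ 0) (hq : ‖q‖ < 1) (hk : k ≠ 0) (δ : ℕ)
    {e : (ℕ → ℕ) → ℤ} {f : ℕ → ℕ → ℕ → ℂ}
    (hf : ∀ i, ∃ A ≥ 1, ∀ n m, ‖f i n m‖ ≤ A ^ (n + 1))
    (hef : ∀ t : ℕ → ℕ,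
      q ^ e t * ∏ i ∈ range k, baseChangeKernel (q ^ 2 ^ i) (t (i + 1)) (t (i + 2)) =
        q ^ (δ * t 0) * ∏ i ∈ range k, f i (t (i + 1)) (t (i + 2))) :
    ∑' s : {s : Fin (k + 1) → ℕ // Antitone s},
        multisumTerm q k (e (extendByZero s.1)) (extendByZero s.1) =
      ∑' n : ℕ, q ^ (n ^ 2 + δ * n) *
        ∑ m ∈ range (n + 1), baileyKernel q n m * nestedSum k f m := by
  refine Eq.trans (tsum_congr fun s => ?_) (tsum_antitone_mul_prod k (fun n => q ^ (n ^ 2 + δ * n))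
    (baileyChainKernel q f) (summable_mul_nestedSum_baileyChainKernel hq hf (k + 1) δ))
  rw [multisumTerm_eq hq0 hk _ (antitone_extendByZero s.2) (extendByZero_of_ge _ le_rfl), hef,
    prod_range_succ', pow_add]
  simp only [baileyChainKernel]
  ring

end Multisum

section Identities

variable {q : ℂ} {k : ℕ}

lemma sum_baileyKernel_mul_baileyTransform_thetaTerm (hq0 : q ≠ 0) (hq : ‖q‖ < 1) (a b n : ℕ) :
    ∑ m ∈ range (n + 1), baileyKernel q n m * baileyTransform q (thetaTerm (q ^ a) (q ^ b)) m m =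
      baileyTransform q (thetaTerm (q ^ (a + 1)) (q ^ (b + 2))) n n := by
  rw [sum_baileyKernel_mul_baileyTransform hq]
  simp only [zpow_sq_mul_thetaTerm hq0, ← pow_succ', pow_add, mul_comm]

lemma prod_twistedKernel (q : ℂ) {j : ℕ} (hjk : j < k) (t : ℕ → ℕ) :
    ∏ i ∈ range k, twistedKernel q j i (t (i + 1)) (t (i + 2)) =
      q ^ (-(2 ^ j * t (j + 1)) : ℤ) *
        ∏ i ∈ range k, baseChangeKernel (q ^ 2 ^ i) (t (i + 1)) (t (i + 2)) := by
  simp only [twistedKernel, prod_mul_distrib, prod_ite_eq', mem_range, hjk, if_true]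
  congr 1
  rw [zpow_neg, ← pow_mul]
  norm_cast

theorem tsum_multisumTerm_neg_two_pow_mul (hq0 : q ≠ 0) (hq : ‖q‖ < 1) {j : ℕ} (hjk : j < k) :
    ∑' s : {s : Fin (k + 1) → ℕ // Antitone s},
        multisumTerm q k (-(2 ^ j * extendByZero s.1 (j + 1))) (extendByZero s.1) =
      qPochInf (q ^ (2 ^ k + 4)) (q ^ (2 ^ k + 4)) *
        qPochInf (q ^ (2 ^ j + 2)) (q ^ (2 ^ k + 4)) *
        qPochInf (q ^ (2 ^ k - 2 ^ j + 2)) (q ^ (2 ^ k + 4)) / qPochInf q q := by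
  have hpow : 2 ^ j ≤ 2 ^ k := Nat.pow_le_pow_right two_pos hjk.le
  rw [tsum_multisumTerm_eq_tsum_nestedSum hq0 hq (Nat.ne_zero_of_lt hjk)
    (e := fun t => -(2 ^ j * t (j + 1))) 0 (exists_norm_twistedKernel_le hq0 hq j)
    fun t => by rw [prod_twistedKernel q hjk, zero_mul, pow_zero, one_mul]]
  simp only [nestedSum_twistedKernel hq0 hq hjk, zero_mul, add_zero,
    sum_baileyKernel_mul_baileyTransform_thetaTerm hq0 hq]
  rw [tsum_pow_sq_mul_baileyTransform_thetaTerm hq0 hq (Nat.succ_ne_zero _) (by omega),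
    show 2 ^ k + 2 + 1 - (2 ^ j + 1) = 2 ^ k - 2 ^ j + 2 by omega]

theorem tsum_multisumTerm_zero (hq0 : q ≠ 0) (hq : ‖q‖ < 1) (hk : k ≠ 0) :
    ∑' s : {s : Fin (k + 1) → ℕ // Antitone s}, multisumTerm q k 0 (extendByZero s.1) =
      qPochInf (q ^ (2 ^ k + 4)) (q ^ (2 ^ k + 4)) * qPochInf (q ^ 2) (q ^ (2 ^ k + 4)) *
        qPochInf (q ^ (2 ^ k + 2)) (q ^ (2 ^ k + 4)) / qPochInf q q := by
  rw [tsum_multisumTerm_eq_tsum_nestedSum hq0 hq hk (e := fun _ => 0) 0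
    (exists_norm_baseChangeKernel_two_pow_le hq) fun t => by rw [zero_mul, zpow_zero, pow_zero]]
  simp only [nestedSum_baseChangeKernel hq0 hq, zero_mul, add_zero, ← pow_zero q,
    sum_baileyKernel_mul_baileyTransform_thetaTerm hq0 hq]
  exact tsum_pow_sq_mul_baileyTransform_thetaTerm hq0 hq (Nat.succ_ne_zero _) (Nat.le_add_left 1 _)

theorem tsum_multisumTerm_head (hq0 : q ≠ 0) (hq : ‖q‖ < 1) (hk : k ≠ 0) :
    ∑' s : {s : Fin (k + 1) → ℕ // Antitone s},
        multisumTerm q k (extendByZero s.1 0) (extendByZero s.1) =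
      qPochInf (q ^ (2 ^ k + 4)) (q ^ (2 ^ k + 4)) * qPochInf q (q ^ (2 ^ k + 4)) *
        qPochInf (q ^ (2 ^ k + 3)) (q ^ (2 ^ k + 4)) / qPochInf q q := by
  rw [tsum_multisumTerm_eq_tsum_nestedSum hq0 hq hk (e := fun t => t 0) 1
    (exists_norm_baseChangeKernel_two_pow_le hq) fun t => by rw [zpow_natCast, one_mul]]
  have hterm (n : ℕ) : q ^ (n ^ 2 + 1 * n) * ∑ m ∈ range (n + 1), baileyKernel q n m *
      nestedSum k (fun i => baseChangeKernel (q ^ 2 ^ i)) m =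
        q ^ n ^ 2 * baileyTransform q (thetaTerm (q ^ 0) (q ^ (2 ^ k + 2))) n n := by
    have hshift := inv_zpow_mul_baileyTransform_of_antisymm
      (thetaTerm_one_left_one_sub (q ^ (2 ^ k + 2))) hq0 hq n
    simp only [mul_comm (thetaTerm _ _ _), zpow_mul_thetaTerm, mul_one, zpow_natCast] at hshift
    simp only [nestedSum_baseChangeKernel hq0 hq]
    rw [← pow_zero q, sum_baileyKernel_mul_baileyTransform_thetaTerm hq0 hq, pow_zero, zero_add,
      pow_one, ← hshift, one_mul, pow_add, mul_assoc, mul_inv_cancel_left₀ (pow_ne_zero n hq0)]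
  rw [tsum_congr hterm,
    tsum_pow_sq_mul_baileyTransform_thetaTerm hq0 hq (Nat.succ_ne_zero _) (Nat.zero_le _),
    zero_add, pow_one]
  rfl

end Identities

/-- Corollary 4.4.  The tuple `s` encodes `s_1 ≥ s_2 ≥ ⋯ ≥ s_{k+1} ≥ 0` via `s_m = t (m-1)`,
with the convention `s_{k+2} = 0`.  The base exponent is
`E₀ = s_1² + s_2² + s_2 + ∑_{m=3}^{k+1} 2^{m-3} s_m` (an integer), and the three identities
correspond to the perturbations `-2^{j-1} s_{j+1}`, `0`, and `+s_1` of `E₀`. -/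
theorem corollary_4_4 (q : ℂ) (h0 : 0 < ‖q‖) (h1 : ‖q‖ < 1)
    (k j : ℕ) (hk : 1 ≤ k) (hj1 : 1 ≤ j) (hjk : j ≤ k) :
    ((∑' s : {s : Fin (k + 1) → ℕ // Antitone s},
      (let t : ℕ → ℕ := fun m => if h : m < k + 1 then s.1 ⟨m, h⟩ else 0
       q ^ ((t 0 : ℤ) ^ 2 + (t 1 : ℤ) ^ 2 + (t 1 : ℤ) +
            (∑ m ∈ Finset.Ico 2 (k + 1), (2 : ℤ) ^ (m - 2) * (t m : ℤ)) -
            (2 : ℤ) ^ (j - 1) * (t j : ℤ)) /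
         qPoch q q (t 0 - t 1) *
         ∏ i ∈ Finset.Ico 2 (k + 2),
           qPoch (-(q ^ 2 ^ (i - 2))) (q ^ 2 ^ (i - 2)) (2 * t i) /
             qPoch (q ^ 2 ^ (i - 1)) (q ^ 2 ^ (i - 1)) (t (i - 1) - t i))) =
      qPochInf (q ^ (2 ^ k + 4)) (q ^ (2 ^ k + 4)) *
        qPochInf (q ^ (2 ^ (j - 1) + 2)) (q ^ (2 ^ k + 4)) *
        qPochInf (q ^ (2 ^ k - 2 ^ (j - 1) + 2)) (q ^ (2 ^ k + 4)) / qPochInf q q) ∧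
    ((∑' s : {s : Fin (k + 1) → ℕ // Antitone s},
      (let t : ℕ → ℕ := fun m => if h : m < k + 1 then s.1 ⟨m, h⟩ else 0
       q ^ ((t 0) ^ 2 + (t 1) ^ 2 + t 1 + ∑ m ∈ Finset.Ico 2 (k + 1), 2 ^ (m - 2) * t m) /
         qPoch q q (t 0 - t 1) *
         ∏ i ∈ Finset.Ico 2 (k + 2),
           qPoch (-(q ^ 2 ^ (i - 2))) (q ^ 2 ^ (i - 2)) (2 * t i) /
             qPoch (q ^ 2 ^ (i - 1)) (q ^ 2 ^ (i - 1)) (t (i - 1) - t i))) =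
      qPochInf (q ^ (2 ^ k + 4)) (q ^ (2 ^ k + 4)) * qPochInf (q ^ 2) (q ^ (2 ^ k + 4)) *
        qPochInf (q ^ (2 ^ k + 2)) (q ^ (2 ^ k + 4)) / qPochInf q q) ∧
    ((∑' s : {s : Fin (k + 1) → ℕ // Antitone s},
      (let t : ℕ → ℕ := fun m => if h : m < k + 1 then s.1 ⟨m, h⟩ else 0
       q ^ ((t 0) ^ 2 + (t 1) ^ 2 + t 1 + (∑ m ∈ Finset.Ico 2 (k + 1), 2 ^ (m - 2) * t m) +
            t 0) /
         qPoch q q (t 0 - t 1) *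
         ∏ i ∈ Finset.Ico 2 (k + 2),
           qPoch (-(q ^ 2 ^ (i - 2))) (q ^ 2 ^ (i - 2)) (2 * t i) /
             qPoch (q ^ 2 ^ (i - 1)) (q ^ 2 ^ (i - 1)) (t (i - 1) - t i))) =
      qPochInf (q ^ (2 ^ k + 4)) (q ^ (2 ^ k + 4)) * qPochInf q (q ^ (2 ^ k + 4)) *
        qPochInf (q ^ (2 ^ k + 3)) (q ^ (2 ^ k + 4)) / qPochInf q q) := by
  have hq0 : q ≠ 0 := norm_pos_iff.mp h0
  obtain ⟨j, rfl⟩ := Nat.exists_eq_succ_of_ne_zero (Nat.ne_zero_of_lt hj1)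
  have hk0 : k ≠ 0 := Nat.ne_zero_of_lt hk
  refine ⟨tsum_multisumTerm_neg_two_pow_mul hq0 h1 hjk, ?_, ?_⟩
  · rw [← tsum_multisumTerm_zero hq0 h1 hk0]
    simp only [multisumTerm, add_zero]
    norm_cast
  · rw [← tsum_multisumTerm_head hq0 h1 hk0]
    simp only [multisumTerm]
    norm_cast
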